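/- arXiv:math/0112309 — 8 statements merged into one kernel-verified Lean document; each statement's English description precedes it below -/
import Mathlib

section
/- The star product of two elements of S^c again satisfies the twisted periodicity condition: if Φ, Ψ ∈ S^c then (Φ ⋆ Ψ)(x + k, y, p) = e(ckpy)·(Φ ⋆ Ψ)(x, y, p) for all k ∈ ℤ, x ∈ ℝ, y ∈ ℝ, p ∈ ℤ. -/
/-!
The identity holds term by term in the sum over `q`. Translating `x` by `k` multiplies the factor
of `Φ` by `e(c k q (y - ℏ(q-p)ν))` and the factor of `Ψ` by `e(c k (p-q) (y - ℏqν))`. The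
`ν`-contributions `q (q-p)` and `(p-q) q` cancel, so the product of the two phases is `e(c k p y)`,
which does not depend on `q` and comes out of the sum.
-/

open MeasureTheory ENNReal

noncomputable section

/-- Membership in the space `S^c` of Rieffel's quantum Heisenberg manifold. -/
structure InSc (c : ℕ) (Φ : ℝ → ℝ → ℤ → ℂ) : Prop where
  smooth : ∀ p : ℤ, ContDiff ℝ (⊤ : ℕ∞) (fun xy : ℝ × ℝ => Φ xy.1 xy.2 p)
  periodic_y : ∀ (x y : ℝ) (p : ℤ), Φ x (y + 1) p = Φ x y p
  twisted : ∀ (k : ℤ) (x y : ℝ) (p : ℤ),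
    Φ (x + k) y p = Complex.exp (2 * Real.pi * Complex.I * ((c : ℂ) * (k : ℂ) * (p : ℂ) * (y : ℂ))) * Φ x y p
  poly_bounded : ∀ (P : Polynomial ℤ) (m n : ℕ) (K : Set (ℝ × ℝ)), IsCompact K →
    ∃ C : ℝ, ∀ (x y : ℝ) (p : ℤ), (x, y) ∈ K →
      |((P.eval p : ℤ) : ℝ)| * ‖iteratedDeriv m (fun x' => iteratedDeriv n (fun y' => Φ x' y' p) y) x‖ ≤ C

/-- The star product on `S^c`. -/
def starProd (hbar μ ν : ℝ) (Φ Ψ : ℝ → ℝ → ℤ → ℂ) : ℝ → ℝ → ℤ → ℂ :=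
  fun x y p => ∑' q : ℤ,
    Φ (x - hbar * ((q - p : ℤ) : ℝ) * μ) (y - hbar * ((q - p : ℤ) : ℝ) * ν) q *
    Ψ (x - hbar * (q : ℝ) * μ) (y - hbar * (q : ℝ) * ν) (p - q)

/-- The involution on `S^c`. -/
def invol (Φ : ℝ → ℝ → ℤ → ℂ) : ℝ → ℝ → ℤ → ℂ :=
  fun x y p => (starRingEnd ℂ) (Φ x y (-p))

/-- The norm `‖·‖_{∞,∞,1}`, valued in `ℝ≥0∞`. -/
def norm1 (Φ : ℝ → ℝ → ℤ → ℂ) : ℝ≥0∞ :=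
  ∑' p : ℤ, ⨆ x : ℝ, ⨆ y : ℝ, (‖Φ x y p‖₊ : ℝ≥0∞)

/-- The representation `π` acting on functions on `ℝ × [0,1) × ℤ`. -/
def piRep (hbar μ ν : ℝ) (Φ ξ : ℝ → ℝ → ℤ → ℂ) : ℝ → ℝ → ℤ → ℂ :=
  fun x y p => ∑' q : ℤ,
    Φ (x - hbar * ((q - 2 * p : ℤ) : ℝ) * μ) (y - hbar * ((q - 2 * p : ℤ) : ℝ) * ν) q *
    ξ x y (p - q)

/-- Square integrability (with measurability) on `ℝ × [0,1) × ℤ`. -/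
def SqInt (ξ : ℝ → ℝ → ℤ → ℂ) : Prop :=
  (∀ p : ℤ, Measurable (fun xy : ℝ × ℝ => ξ xy.1 xy.2 p)) ∧
  (∫⁻ x : ℝ, ∫⁻ y in Set.Ico (0:ℝ) 1, ∑' p : ℤ, ((‖ξ x y p‖₊ : ℝ≥0∞)) ^ 2) < ⊤

/-- The `L²` norm on `ℝ × [0,1) × ℤ`, valued in `ℝ≥0∞`. -/
def l2norm (ξ : ℝ → ℝ → ℤ → ℂ) : ℝ≥0∞ :=
  (∫⁻ x : ℝ, ∫⁻ y in Set.Ico (0:ℝ) 1, ∑' p : ℤ, ((‖ξ x y p‖₊ : ℝ≥0∞)) ^ 2) ^ (1/2 : ℝ)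

/-- The inner product on `L²(ℝ × [0,1) × ℤ)`. -/
def ip (ξ η : ℝ → ℝ → ℤ → ℂ) : ℂ :=
  ∫ x : ℝ, ∫ y in Set.Ico (0:ℝ) 1, ∑' p : ℤ, ξ x y p * (starRingEnd ℂ) (η x y p)

/-- The action of the Heisenberg group. -/
def Lact (c : ℕ) (r s t : ℝ) (Φ : ℝ → ℝ → ℤ → ℂ) : ℝ → ℝ → ℤ → ℂ :=
  fun x y p => Complex.exp (2 * Real.pi * Complex.I *
    ((p : ℂ) * ((t : ℂ) + (c : ℂ) * (s : ℂ) * ((x : ℂ) - (r : ℂ))))) * Φ (x - r) (y - s) p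

/-- The trace `τ`. -/
def tr (Φ : ℝ → ℝ → ℤ → ℂ) : ℂ :=
  ∫ x in (0:ℝ)..1, ∫ y in (0:ℝ)..1, Φ x y 0

/-- The zero mode `Φ⁽⁰⁾`. -/
def zeroMode (Φ : ℝ → ℝ → ℤ → ℂ) : ℝ → ℝ → ℤ → ℂ :=
  fun x y p => if p = 0 then Φ x y 0 else 0

/-- The derivation `δ₁`. -/
def d1 (Φ : ℝ → ℝ → ℤ → ℂ) : ℝ → ℝ → ℤ → ℂ :=
  fun x y p => -(deriv (fun x' => Φ x' y p) x)

/-- The derivation `δ₂`. -/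
def d2 (c : ℕ) (Φ : ℝ → ℝ → ℤ → ℂ) : ℝ → ℝ → ℤ → ℂ :=
  fun x y p => 2 * Real.pi * Complex.I * (c : ℂ) * (p : ℂ) * (x : ℂ) * Φ x y p
    - deriv (fun y' => Φ x y' p) y

/-- The derivation `δ₃`. -/
def d3 (Φ : ℝ → ℝ → ℤ → ℂ) : ℝ → ℝ → ℤ → ℂ :=
  fun x y p => 2 * Real.pi * Complex.I * (p : ℂ) * Φ x y p


theorem starProd_twisted_periodicity (c : ℕ) (hc : 0 < c) (hbar μ ν : ℝ) (hμν : μ ^ 2 + ν ^ 2 ≠ 0)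
    (Φ Ψ : ℝ → ℝ → ℤ → ℂ) (hΦ : InSc c Φ) (hΨ : InSc c Ψ) :
    ∀ (k : ℤ) (x y : ℝ) (p : ℤ),
      starProd hbar μ ν Φ Ψ (x + k) y p =
        Complex.exp (2 * Real.pi * Complex.I * ((c : ℂ) * (k : ℂ) * (p : ℂ) * (y : ℂ))) *
          starProd hbar μ ν Φ Ψ x y p := by
  intro k x y p
  unfold starProd
  -- `tsum_mul_left` holds in a division ring without any summability hypothesis.
  rw [← tsum_mul_left]
  refine tsum_congr fun q => ?_
  rw [show x + (k : ℝ) - hbar * ((q - p : ℤ) : ℝ) * μ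
        = x - hbar * ((q - p : ℤ) : ℝ) * μ + k by ring,
    show x + (k : ℝ) - hbar * (q : ℝ) * μ = x - hbar * (q : ℝ) * μ + k by ring,
    hΦ.twisted, hΨ.twisted, mul_mul_mul_comm, ← Complex.exp_add]
  congr 2
  push_cast
  ring

end
end

section
/- The star product on S^c is associative: for all Φ, Ψ, Θ ∈ S^c, ((Φ ⋆ Ψ) ⋆ Θ)(x, y, p) = (Φ ⋆ (Ψ ⋆ Θ))(x, y, p) for all x ∈ ℝ, y ∈ ℝ, p ∈ ℤ. -/
/-!
Both triple products are iterated sums over `ℤ × ℤ` of the same family: with `q` the outer index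
on the left and `r` the outer index on the right, the substitution `s = q - r` in the inner sum on
the right turns both summands into
`Φ(x - ℏ(r-p)μ, ·, r) Ψ(x - ℏ(q+r-p)μ, ·, q-r) Θ(x - ℏqμ, ·, p-q)`.
It remains to exchange the two sums. Twisted periodicity in `x` and periodicity in `y` leave `‖Φ‖`
invariant under integer translations, so the decay bounds on the compact unit square hold on the
whole plane (`InSc.exists_decay`): every element of `S^c` is uniformly `O(1 / (1 + p²))`. Hence the
family is dominated by a constant times `1 / (1 + r²) · 1 / (1 + (p-q)²)`, which is summable.
-/

open MeasureTheory ENNReal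

noncomputable section

/-- The modulus of an element of `S^c` descends to the torus `ℝ² / ℤ²`. -/
lemma InSc.norm_fract {c : ℕ} {Φ : ℝ → ℝ → ℤ → ℂ} (h : InSc c Φ) (x y : ℝ) (p : ℤ) :
    ‖Φ x y p‖ = ‖Φ (Int.fract x) (Int.fract y) p‖ := by
  have hx : ‖Φ x y p‖ = ‖Φ (Int.fract x) y p‖ := by
    have h1 := h.twisted ⌊x⌋ (Int.fract x) y p
    rw [Int.fract_add_floor] at h1
    have h2 : (2 * Real.pi * Complex.I * ((c : ℂ) * (⌊x⌋ : ℂ) * (p : ℂ) * (y : ℂ)))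
        = ((2 * Real.pi * (c * ⌊x⌋ * p * y) : ℝ) : ℂ) * Complex.I := by
      push_cast; ring
    rw [h1, norm_mul, h2, Complex.norm_exp_ofReal_mul_I, one_mul]
  have hper : Function.Periodic (fun y' => Φ (Int.fract x) y' p) 1 :=
    fun y' => h.periodic_y _ y' p
  have hy : Φ (Int.fract x) (Int.fract y) p = Φ (Int.fract x) y p := by
    have := hper.sub_int_mul_eq (x := y) ⌊y⌋
    rwa [mul_one, Int.self_sub_floor] at this
  rw [hx, hy]

lemma InSc.exists_decay {c : ℕ} {Φ : ℝ → ℝ → ℤ → ℂ} (h : InSc c Φ) :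
    ∃ C : ℝ, 0 ≤ C ∧ ∀ (x y : ℝ) (p : ℤ), ‖Φ x y p‖ ≤ C * (1 / (1 + (p : ℝ) ^ 2)) := by
  obtain ⟨C, hC⟩ := h.poly_bounded (1 + Polynomial.X ^ 2) 0 0
    (Set.Icc (0 : ℝ) 1 ×ˢ Set.Icc (0 : ℝ) 1) (isCompact_Icc.prod isCompact_Icc)
  have key : ∀ (x y : ℝ) (p : ℤ), (1 + (p : ℝ) ^ 2) * ‖Φ x y p‖ ≤ C := by
    intro x y p
    have := hC (Int.fract x) (Int.fract y) p
      ⟨⟨Int.fract_nonneg x, (Int.fract_lt_one x).le⟩, ⟨Int.fract_nonneg y, (Int.fract_lt_one y).le⟩⟩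
    have hp : |(1 + (p : ℝ) ^ 2)| = 1 + (p : ℝ) ^ 2 := abs_of_pos (by positivity)
    simp only [iteratedDeriv_zero, Polynomial.eval_add, Polynomial.eval_one, Polynomial.eval_pow,
      Polynomial.eval_X, Int.cast_add, Int.cast_one, Int.cast_pow, hp] at this
    rwa [← h.norm_fract] at this
  refine ⟨C, le_trans (by positivity) (key 0 0 0), fun x y p => ?_⟩
  rw [mul_one_div, le_div_iff₀ (by positivity), mul_comm]
  exact key x y p

lemma summable_one_div_one_add_int_sq : Summable (fun p : ℤ => 1 / (1 + (p : ℝ) ^ 2)) := by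
  have h2 : Summable (fun p : ℤ => 1 / (p : ℝ) ^ 2) :=
    Real.summable_one_div_int_pow.mpr (by norm_num)
  -- The comparison with `1 / p²` fails only at `p = 0`, where `1 / 0 = 0`.
  refine Summable.of_norm_bounded_eventually h2 ?_
  filter_upwards [(Set.finite_singleton (0 : ℤ)).compl_mem_cofinite] with p hp
  have hp0 : (p : ℝ) ≠ 0 := by exact_mod_cast hp
  rw [Real.norm_of_nonneg (by positivity)]
  gcongr
  linarith

theorem starProd_assoc (c : ℕ) (hc : 0 < c) (hbar μ ν : ℝ) (hμν : μ ^ 2 + ν ^ 2 ≠ 0)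
    (Φ Ψ Θ : ℝ → ℝ → ℤ → ℂ) (hΦ : InSc c Φ) (hΨ : InSc c Ψ) (hΘ : InSc c Θ) :
    ∀ (x y : ℝ) (p : ℤ),
      starProd hbar μ ν (starProd hbar μ ν Φ Ψ) Θ x y p =
      starProd hbar μ ν Φ (starProd hbar μ ν Ψ Θ) x y p := by
  intro x y p
  obtain ⟨A, hA0, hA⟩ := hΦ.exists_decay
  obtain ⟨B, hB0, hB⟩ := hΨ.exists_decay
  obtain ⟨D, hD0, hD⟩ := hΘ.exists_decay
  let F : ℤ → ℤ → ℂ := fun q r =>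
    Φ (x - hbar * ((r : ℝ) - p) * μ) (y - hbar * ((r : ℝ) - p) * ν) r *
    Ψ (x - hbar * ((q : ℝ) + r - p) * μ) (y - hbar * ((q : ℝ) + r - p) * ν) (q - r) *
    Θ (x - hbar * q * μ) (y - hbar * q * ν) (p - q)
  have hF : Summable (Function.uncurry F) := by
    have h1 : Summable (fun q : ℤ => 1 / (1 + ((p - q : ℤ) : ℝ) ^ 2)) :=
      (Equiv.subLeft p).summable_iff.mpr summable_one_div_one_add_int_sq
    have h2 := (h1.mul_of_nonneg summable_one_div_one_add_int_sq
      (fun q => by positivity) (fun r => by positivity)).mul_left (A * B * D)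
    refine Summable.of_norm_bounded h2 ?_
    rintro ⟨q, r⟩
    have hB' : ∀ (u v : ℝ) (n : ℤ), ‖Ψ u v n‖ ≤ B := fun u v n =>
      (hB u v n).trans (mul_le_of_le_one_right hB0
        (div_le_one_of_le₀ (by nlinarith [sq_nonneg (n : ℝ)]) (by positivity)))
    simp only [Function.uncurry, F, norm_mul]
    calc _ ≤ (A * (1 / (1 + (r : ℝ) ^ 2))) * B * (D * (1 / (1 + ((p - q : ℤ) : ℝ) ^ 2))) := by
          gcongr
          · exact hA _ _ _
          · exact hB' _ _ _
          · exact hD _ _ _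
      _ = _ := by ring
  have hL : starProd hbar μ ν (starProd hbar μ ν Φ Ψ) Θ x y p = ∑' q, ∑' r, F q r := by
    simp only [starProd]
    refine tsum_congr fun q => ?_
    rw [← tsum_mul_right]
    refine tsum_congr fun r => ?_
    simp only [F]
    push_cast
    congr 3 <;> ring
  have hR : starProd hbar μ ν Φ (starProd hbar μ ν Ψ Θ) x y p = ∑' r, ∑' q, F q r := by
    simp only [starProd]
    refine tsum_congr fun r => ?_
    rw [← tsum_mul_left, ← (Equiv.subRight r).tsum_eq]
    refine tsum_congr fun q => ?_
    simp only [F, Equiv.subRight_apply, mul_assoc (Φ _ _ _)]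
    have e : p - r - (q - r) = p - q := by ring
    rw [e]
    push_cast
    congr 3 <;> ring
  rw [hL, hR]
  exact hF.tsum_comm.symm


end
end

section
/- The involution on S^c is an anti-homomorphism for the star product: for all Φ, Ψ ∈ S^c, (Φ ⋆ Ψ)* = Ψ* ⋆ Φ* as functions on ℝ × ℝ × ℤ. -/
open MeasureTheory ENNReal

noncomputable section

theorem invol_starProd (c : ℕ) (hc : 0 < c) (hbar μ ν : ℝ) (hμν : μ ^ 2 + ν ^ 2 ≠ 0)
    (Φ Ψ : ℝ → ℝ → ℤ → ℂ) (hΦ : InSc c Φ) (hΨ : InSc c Ψ) :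
    ∀ (x y : ℝ) (p : ℤ),
      invol (starProd hbar μ ν Φ Ψ) x y p =
      starProd hbar μ ν (invol Ψ) (invol Φ) x y p := by
  intro x y p
  simp only [invol, starProd]
  rw [Complex.conj_tsum]
  -- Substitute `r = q + p` in the sum over `r` defining the right-hand side. A bijective
  -- reindexing preserves `tsum` unconditionally, whether or not the family is summable.
  refine Eq.trans ?_ ((Equiv.addRight p).tsum_eq _)
  refine tsum_congr fun q => ?_
  have h₁ : q - -p = q + p := by ring
  have h₂ : -p - q = -(q + p) := by ring
  have h₃ : q + p - p = q := by ring
  have h₄ : -(p - (q + p)) = q := by ring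
  simp only [Equiv.coe_addRight, map_mul, h₁, h₂, h₃, h₄]
  exact mul_comm _ _

end
end

section
/- The map π is multiplicative: for all Φ, Ψ ∈ S^c and every square-integrable function ξ : ℝ × [0,1) × ℤ → ℂ, (π(Φ ⋆ Ψ)ξ)(x, y, p) = (π(Φ)(π(Ψ)ξ))(x, y, p) for almost every (x, y, p). -/
/-!
Elements of `S^c` are bounded by `C / (1 + p²)` uniformly in `(x, y)` (`InSc.exists_bound`), and for
almost every `(x, y)` the sequence `p ↦ ξ x y p` is square-summable, hence bounded
(`SqInt.ae_bounded`). For such `(x, y)`, both sides at `p` are iterated sums of one absolutely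
summable family on `ℤ × ℤ`,
`Φ(x - ℏ(r - 2p)μ, …, r) Ψ(x - ℏ(s + 2r - 2p)μ, …, s) ξ(x, y, p - r - s)`:
the right side sums over `s` and then `r`, the left side over `r` and then `q = r + s`. The two sums
agree by `tsum_tsum_sub_eq`.
-/

open MeasureTheory ENNReal

noncomputable section

/-- Elements of `S^c` are bounded on all of `ℝ²` with quadratic decay in `p`: on the unit square this
is `poly_bounded` for `P = 1 + X²`, and `‖Φ‖` is `1`-periodic in both variables because the twisting
factor has modulus one. -/
lemma InSc.exists_bound {c : ℕ} {Φ : ℝ → ℝ → ℤ → ℂ} (hΦ : InSc c Φ) :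
    ∃ C : ℝ, ∀ (x y : ℝ) (p : ℤ), ‖Φ x y p‖ ≤ C * (1 + (p : ℝ) ^ 2)⁻¹ := by
  obtain ⟨C, hC⟩ := hΦ.poly_bounded (1 + Polynomial.X ^ 2) 0 0
    (Set.Icc (0 : ℝ) 1 ×ˢ Set.Icc (0 : ℝ) 1) (isCompact_Icc.prod isCompact_Icc)
  refine ⟨C, fun x y p => ?_⟩
  have hy : Φ x y p = Φ x (Int.fract y) p := by
    have hper : Function.Periodic (fun y => Φ x y p) 1 := fun y => hΦ.periodic_y x y p
    have h := hper.int_mul ⌊y⌋ (Int.fract y)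
    simpa [Int.fract_add_floor] using h
  have hx : ‖Φ x (Int.fract y) p‖ = ‖Φ (Int.fract x) (Int.fract y) p‖ := by
    have h := hΦ.twisted ⌊x⌋ (Int.fract x) (Int.fract y) p
    rw [Int.fract_add_floor] at h
    rw [h, norm_mul, Complex.norm_exp]
    simp
  have h := hC (Int.fract x) (Int.fract y) p
    ⟨⟨Int.fract_nonneg x, (Int.fract_lt_one x).le⟩, ⟨Int.fract_nonneg y, (Int.fract_lt_one y).le⟩⟩
  have hpos : (0 : ℝ) < 1 + (p : ℝ) ^ 2 := by positivity
  simp only [iteratedDeriv_zero] at h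
  rw [hy, hx, ← div_eq_mul_inv, le_div_iff₀ hpos, mul_comm]
  have habs : |(((1 + Polynomial.X ^ 2 : Polynomial ℤ).eval p : ℤ) : ℝ)| = 1 + (p : ℝ) ^ 2 := by
    simp only [Polynomial.eval_add, Polynomial.eval_one, Polynomial.eval_pow, Polynomial.eval_X]
    push_cast
    exact abs_of_pos hpos
  rwa [habs] at h

lemma summable_inv_one_add_int_sq : Summable (fun p : ℤ => (1 + (p : ℝ) ^ 2)⁻¹) := by
  have h : Summable (fun p : ℤ => 1 / (p : ℝ) ^ 2) :=
    Real.summable_one_div_int_pow.mpr one_lt_two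
  refine Summable.of_norm_bounded_eventually h ?_
  rw [Filter.eventually_cofinite]
  refine (Set.finite_singleton (0 : ℤ)).subset fun p hp => ?_
  by_contra hp0
  apply hp
  have hp' : (0 : ℝ) < (p : ℝ) ^ 2 := by
    have : (p : ℝ) ≠ 0 := by exact_mod_cast hp0
    positivity
  rw [Real.norm_of_nonneg (by positivity), one_div]
  exact inv_anti₀ hp' (by linarith)

/-- For almost every `(x, y)` the sequence `ξ x y ·` lies in `ℓ²(ℤ)`, hence is bounded. -/
lemma SqInt.ae_bounded {ξ : ℝ → ℝ → ℤ → ℂ} (hξ : SqInt ξ) :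
    ∀ᵐ x : ℝ ∂volume, ∀ᵐ y ∂(volume.restrict (Set.Ico (0 : ℝ) 1)),
      ∃ M : ℝ, ∀ p : ℤ, ‖ξ x y p‖ ≤ M := by
  obtain ⟨hm, hfin⟩ := hξ
  have hm2 : Measurable (fun xy : ℝ × ℝ =>
      ∑' p : ℤ, ((‖ξ xy.1 xy.2 p‖₊ : ℝ≥0∞)) ^ 2) :=
    Measurable.tsum fun p => ((hm p).nnnorm.coe_nnreal_ennreal).pow_const 2
  have hm1 : Measurable (fun x : ℝ =>
      ∫⁻ y in Set.Ico (0 : ℝ) 1, ∑' p : ℤ, ((‖ξ x y p‖₊ : ℝ≥0∞)) ^ 2) :=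
    Measurable.lintegral_prod_right' hm2
  filter_upwards [ae_lt_top hm1 hfin.ne] with x hx
  have hmx : Measurable (fun y : ℝ => ∑' p : ℤ, ((‖ξ x y p‖₊ : ℝ≥0∞)) ^ 2) :=
    hm2.comp measurable_prodMk_left
  filter_upwards [ae_lt_top hmx hx.ne] with y hy
  refine ⟨Real.sqrt (∑' p : ℤ, ((‖ξ x y p‖₊ : ℝ≥0∞)) ^ 2).toReal, fun p => ?_⟩
  apply Real.le_sqrt_of_sq_le
  have h := ENNReal.toReal_mono hy.ne (ENNReal.le_tsum (f := fun p : ℤ =>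
    ((‖ξ x y p‖₊ : ℝ≥0∞)) ^ 2) p)
  simpa using h

/-- Absolute convergence justifies exchanging the sums along the shear `(r, s) ↦ (r, r + s)`. -/
lemma tsum_tsum_sub_eq {F : ℤ → ℤ → ℂ} (hF : Summable (Function.uncurry F)) :
    ∑' q : ℤ, ∑' r : ℤ, F r (q - r) = ∑' r : ℤ, ∑' s : ℤ, F r s := by
  let e : ℤ × ℤ ≃ ℤ × ℤ :=
    { toFun := fun a => (a.1, a.2 - a.1)
      invFun := fun a => (a.1, a.2 + a.1)
      left_inv := fun a => by simp
      right_inv := fun a => by simp }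
  have hG : Summable (Function.uncurry fun r q : ℤ => F r (q - r)) :=
    (e.summable_iff (f := Function.uncurry F)).mpr hF
  rw [hG.tsum_comm]
  exact tsum_congr fun r => (Equiv.subRight r).tsum_eq (F r)

theorem piRep_mul (c : ℕ) (hc : 0 < c) (hbar μ ν : ℝ) (hμν : μ ^ 2 + ν ^ 2 ≠ 0)
    (Φ Ψ : ℝ → ℝ → ℤ → ℂ) (hΦ : InSc c Φ) (hΨ : InSc c Ψ)
    (ξ : ℝ → ℝ → ℤ → ℂ) (hξ : SqInt ξ) :
    ∀ᵐ x : ℝ ∂volume, ∀ᵐ y ∂(volume.restrict (Set.Ico (0:ℝ) 1)), ∀ p : ℤ,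
      piRep hbar μ ν (starProd hbar μ ν Φ Ψ) ξ x y p =
      piRep hbar μ ν Φ (piRep hbar μ ν Ψ ξ) x y p := by
  obtain ⟨A, hA⟩ := hΦ.exists_bound
  obtain ⟨B, hB⟩ := hΨ.exists_bound
  filter_upwards [hξ.ae_bounded] with x hx
  filter_upwards [hx] with y hy p
  obtain ⟨M, hM⟩ := hy
  -- The common summand: `r` is the summation index of `Φ`, `s` that of `Ψ`.
  let F : ℤ → ℤ → ℂ := fun r s =>
    Φ (x - hbar * ((r - 2 * p : ℤ) : ℝ) * μ) (y - hbar * ((r - 2 * p : ℤ) : ℝ) * ν) r *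
    (Ψ (x - hbar * ((s - 2 * (p - r) : ℤ) : ℝ) * μ)
      (y - hbar * ((s - 2 * (p - r) : ℤ) : ℝ) * ν) s * ξ x y (p - r - s))
  have hF : Summable (Function.uncurry F) := by
    have hs : Summable (fun a : ℤ × ℤ =>
        (A * (1 + (a.1 : ℝ) ^ 2)⁻¹) * (B * (1 + (a.2 : ℝ) ^ 2)⁻¹) * M) := by
      refine Summable.mul_right M (Summable.mul_of_nonneg
        (summable_inv_one_add_int_sq.mul_left A) (summable_inv_one_add_int_sq.mul_left B) ?_ ?_)
      · exact fun r => (norm_nonneg _).trans (hA 0 0 r)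
      · exact fun s => (norm_nonneg _).trans (hB 0 0 s)
    refine Summable.of_norm_bounded hs ?_
    rintro ⟨r, s⟩
    simp only [Function.uncurry, F, norm_mul]
    rw [← mul_assoc]
    refine mul_le_mul (mul_le_mul (hA _ _ _) (hB _ _ _) (norm_nonneg _)
      ((norm_nonneg _).trans (hA 0 0 r))) (hM _) (norm_nonneg _)
      (mul_nonneg ((norm_nonneg _).trans (hA 0 0 r)) ((norm_nonneg _).trans (hB 0 0 s)))
  have hL : piRep hbar μ ν (starProd hbar μ ν Φ Ψ) ξ x y p =
      ∑' q : ℤ, ∑' r : ℤ, F r (q - r) := by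
    simp only [piRep, starProd]
    refine tsum_congr fun q => ?_
    rw [← tsum_mul_right]
    refine tsum_congr fun r => ?_
    simp only [F]
    rw [mul_assoc]
    congr 1
    · congr 1 <;> push_cast <;> ring
    · congr 1
      · congr 1 <;> push_cast <;> ring
      · congr 1
        ring
  have hR : piRep hbar μ ν Φ (piRep hbar μ ν Ψ ξ) x y p = ∑' r : ℤ, ∑' s : ℤ, F r s := by
    simp only [piRep, F]
    exact tsum_congr fun r => tsum_mul_left.symm
  rw [hL, hR, tsum_tsum_sub_eq hF]

end
end

section
/- The map π is involutive: for every Φ ∈ S^c and all square-integrable ξ, η : ℝ × [0,1) × ℤ → ℂ, the inner product identity ⟨π(Φ*)ξ, η⟩ = ⟨ξ, π(Φ)η⟩ holds, i.e. π(Φ*) is the adjoint of π(Φ) on L²(ℝ × [0,1) × ℤ). -/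
/-!
The identity already holds fibrewise. For fixed `(x, y)` both `π(Φ*)` and `π(Φ)` act on sequences
`ℤ → ℂ` by matrices: `π(Φ*)` has entries `K p r = conj Φ(x + ℏ(p+r)μ, y + ℏ(p+r)ν, r - p)`, and
`π(Φ)` has the conjugate transpose of `K`. By periodicity in `y` and quasi-periodicity in `x`, the
bound of `Φ(·,·,q)` on the unit square is global, so `‖K p r‖ ≤ M (p - r)` with `M` summable
(`InSc.exists_summable_bound`). For square-summable `a`, `b` the double series
`∑ K p r * a r * conj (b p)` then converges absolutely, because `2|a r||b p| ≤ |a r|² + |b p|²`, and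
interchanging the sums gives the adjoint relation (`tsum_adjoint`). Square integrability makes the
fibres of `ξ` and `η` square-summable for almost every `(x, y)` (`SqInt.ae_summable`), so the
integrands of the two inner products agree almost everywhere.
-/

open MeasureTheory ENNReal

noncomputable section

/-- A Schur-type test: a matrix dominated by a summable convolution kernel has its conjugate
transpose as its formal adjoint on square-summable sequences. The inner sums
run over `q`, the column being `p - q`, as in the definition of `piRep`. -/
lemma tsum_adjoint (K : ℤ → ℤ → ℂ) (M : ℤ → ℝ) (hM : Summable M)
    (hK : ∀ p r, ‖K p r‖ ≤ M (p - r)) (a b : ℤ → ℂ)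
    (ha : Summable fun p => ‖a p‖ ^ 2) (hb : Summable fun p => ‖b p‖ ^ 2) :
    ∑' p, (∑' q, K p (p - q) * a (p - q)) * (starRingEnd ℂ) (b p) =
      ∑' p, a p * (starRingEnd ℂ) (∑' q, (starRingEnd ℂ) (K (p - q) p) * b (p - q)) := by
  have hM0 : ∀ q, 0 ≤ M q := fun q => by
    have := (norm_nonneg _).trans (hK q 0)
    simpa using this
  let e₁ : ℤ × ℤ ≃ ℤ × ℤ :=
    ⟨fun z => (z.1 - z.2, z.2), fun z => (z.1 + z.2, z.2), fun z => by simp, fun z => by simp⟩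
  let e₂ : ℤ × ℤ ≃ ℤ × ℤ :=
    ⟨fun z => (z.1 - z.2, z.1), fun z => (z.2, z.2 - z.1), fun z => by simp, fun z => by simp⟩
  have h₁ : Summable fun z : ℤ × ℤ => M (z.1 - z.2) * ‖a z.2‖ ^ 2 :=
    e₁.summable_iff.mpr (hM.mul_of_nonneg ha hM0 fun _ => by positivity)
  have h₂ : Summable fun z : ℤ × ℤ => M (z.1 - z.2) * ‖b z.1‖ ^ 2 :=
    e₂.summable_iff.mpr (hM.mul_of_nonneg hb hM0 fun _ => by positivity)
  have hF : Summable (Function.uncurry fun p r => K p r * a r * (starRingEnd ℂ) (b p)) := by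
    refine (h₁.add h₂).of_norm_bounded ?_
    rintro ⟨p, r⟩
    simp only [Function.uncurry_apply_pair, norm_mul, RCLike.norm_conj]
    have h := hK p r
    have h0 := hM0 (p - r)
    calc ‖K p r‖ * ‖a r‖ * ‖b p‖ = ‖K p r‖ * (‖a r‖ * ‖b p‖) := by ring
      _ ≤ M (p - r) * (‖a r‖ ^ 2 + ‖b p‖ ^ 2) := by
          gcongr
          nlinarith [sq_nonneg (‖a r‖ - ‖b p‖), sq_nonneg ‖a r‖, sq_nonneg ‖b p‖]
      _ = _ := by ring
  calc ∑' p, (∑' q, K p (p - q) * a (p - q)) * (starRingEnd ℂ) (b p)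
      = ∑' p, ∑' r, K p r * a r * (starRingEnd ℂ) (b p) := by
        refine tsum_congr fun p => ?_
        have h := (Equiv.subLeft p).tsum_eq (fun r => K p r * a r)
        simp only [Equiv.subLeft_apply] at h
        rw [h, tsum_mul_right]
    _ = ∑' r, ∑' p, K p r * a r * (starRingEnd ℂ) (b p) := hF.tsum_comm.symm
    _ = _ := by
        refine tsum_congr fun r => ?_
        have h := (Equiv.subLeft r).tsum_eq (fun p => (starRingEnd ℂ) (K p r) * b p)
        simp only [Equiv.subLeft_apply] at h
        rw [h, Complex.conj_tsum, ← tsum_mul_left]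
        refine tsum_congr fun p => ?_
        simp only [map_mul, Complex.conj_conj]
        ring

/-- The sup norms of the modes `Φ(·,·,p)` are dominated by a summable sequence: the bound on the
unit square against the polynomial `1 + X²` extends to the plane because integer translations
preserve `‖Φ‖`. -/
lemma InSc.exists_summable_bound {c : ℕ} {Φ : ℝ → ℝ → ℤ → ℂ} (hΦ : InSc c Φ) :
    ∃ M : ℤ → ℝ, Summable M ∧ ∀ x y p, ‖Φ x y p‖ ≤ M p := by
  obtain ⟨C, hC⟩ := hΦ.poly_bounded (1 + Polynomial.X ^ 2) 0 0
    (Set.Icc (0:ℝ) 1 ×ˢ Set.Icc (0:ℝ) 1) (isCompact_Icc.prod isCompact_Icc)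
  have hx : ∀ x y p, ‖Φ (Int.fract x) y p‖ = ‖Φ x y p‖ := fun x y p => by
    have h := hΦ.twisted ⌊x⌋ (Int.fract x) y p
    rw [Int.fract_add_floor] at h
    rw [h, norm_mul, Complex.norm_exp]
    simp
  have hy : ∀ x y p, Φ x (Int.fract y) p = Φ x y p := fun x y p => by
    have h : Function.Periodic (fun y => Φ x y p) 1 := fun y => hΦ.periodic_y x y p
    simpa only [mul_one, Int.self_sub_floor] using h.sub_int_mul_eq (x := y) ⌊y⌋
  have hs : Summable fun p : ℤ => 1 / (1 + (p : ℝ) ^ 2) := by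
    have h2 : Summable fun p : ℤ => 1 / (p : ℝ) ^ 2 :=
      Real.summable_one_div_int_pow.mpr one_lt_two
    refine h2.of_norm_bounded_eventually ?_
    filter_upwards [(Set.finite_singleton (0 : ℤ)).compl_mem_cofinite] with p hp
    have hp0 : (p : ℝ) ≠ 0 := by exact_mod_cast hp
    rw [Real.norm_of_nonneg (by positivity)]
    exact one_div_le_one_div_of_le (by positivity) (by linarith)
  refine ⟨fun p => C * (1 / (1 + (p : ℝ) ^ 2)), hs.mul_left C, fun x y p => ?_⟩
  have h := hC (Int.fract x) (Int.fract y) p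
    ⟨⟨Int.fract_nonneg x, (Int.fract_lt_one x).le⟩, ⟨Int.fract_nonneg y, (Int.fract_lt_one y).le⟩⟩
  simp only [iteratedDeriv_zero, hx, hy] at h
  have hpos : (0:ℝ) < 1 + (p : ℝ) ^ 2 := by positivity
  have he : |(((1 + Polynomial.X ^ 2 : Polynomial ℤ).eval p : ℤ) : ℝ)| = 1 + (p : ℝ) ^ 2 := by
    simp [abs_of_pos hpos]
  rw [he] at h
  beta_reduce
  rw [mul_one_div, le_div_iff₀ hpos]
  linarith

lemma SqInt.ae_summable {ξ : ℝ → ℝ → ℤ → ℂ} (hξ : SqInt ξ) :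
    ∀ᵐ x : ℝ, ∀ᵐ y ∂(volume.restrict (Set.Ico (0:ℝ) 1)), Summable fun p => ‖ξ x y p‖ ^ 2 := by
  have hm : Measurable fun z : ℝ × ℝ => ∑' p : ℤ, ((‖ξ z.1 z.2 p‖₊ : ℝ≥0∞)) ^ 2 :=
    Measurable.tsum fun p => ((hξ.1 p).nnnorm.coe_nnreal_ennreal).pow_const 2
  have hx := ae_lt_top (hm.lintegral_prod_right' (ν := volume.restrict (Set.Ico (0:ℝ) 1)))
    hξ.2.ne
  filter_upwards [hx] with x hx
  filter_upwards [ae_lt_top (hm.comp measurable_prodMk_left) hx.ne] with y hy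
  have h : ∑' p : ℤ, ((‖ξ x y p‖₊ ^ 2 : NNReal) : ℝ≥0∞) ≠ ⊤ := by
    simpa using hy.ne
  have := NNReal.summable_coe.mpr (ENNReal.tsum_coe_ne_top_iff_summable.mp h)
  simpa using this

theorem piRep_adjoint (c : ℕ) (hc : 0 < c) (hbar μ ν : ℝ) (hμν : μ ^ 2 + ν ^ 2 ≠ 0)
    (Φ : ℝ → ℝ → ℤ → ℂ) (hΦ : InSc c Φ)
    (ξ η : ℝ → ℝ → ℤ → ℂ) (hξ : SqInt ξ) (hη : SqInt η) :
    ip (piRep hbar μ ν (invol Φ) ξ) η = ip ξ (piRep hbar μ ν Φ η) := by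
  obtain ⟨M, hM, hb⟩ := hΦ.exists_summable_bound
  refine integral_congr_ae ?_
  filter_upwards [hξ.ae_summable, hη.ae_summable] with x hx₁ hx₂
  refine integral_congr_ae ?_
  filter_upwards [hx₁, hx₂] with y h₁ h₂
  have key := tsum_adjoint
    (fun p r => (starRingEnd ℂ)
      (Φ (x + hbar * ((p + r : ℤ) : ℝ) * μ) (y + hbar * ((p + r : ℤ) : ℝ) * ν) (r - p)))
    (fun q => M (-q)) ((Equiv.neg ℤ).summable_iff.mpr hM)
    (fun p r => by
      rw [RCLike.norm_conj, neg_sub]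
      exact hb _ _ _)
    (ξ x y) (η x y) h₁ h₂
  have shift : ∀ (t s : ℝ) (p q : ℤ), t - hbar * ((q - 2 * p : ℤ) : ℝ) * s =
      t + hbar * ((p + (p - q) : ℤ) : ℝ) * s := fun t s p q => by
    push_cast
    ring
  simp only [piRep, invol, shift]
  convert key using 9 with p p q
  · ring
  · simp only [Complex.conj_conj]
    congr 1 <;> ring_nf

end
end

section
/- For every (r, s, t) ∈ ℝ³, the map L_{(r,s,t)} is multiplicative for the star product: for all Φ, Ψ ∈ S^c, L_{(r,s,t)}(Φ ⋆ Ψ) = (L_{(r,s,t)}Φ) ⋆ (L_{(r,s,t)}Ψ) as functions on ℝ × ℝ × ℤ. -/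
/-!
The identity holds term by term in the sum over `q`: translating by `(r, s)` commutes with the
shifts in the star product, and the phases `e(q(t + cs(x - ℏ(q-p)μ - r)))` and
`e((p-q)(t + cs(x - ℏqμ - r)))` multiply to `e(p(t + cs(x - r)))`, since the `ℏμ` contributions
cancel.
-/

open MeasureTheory ENNReal

noncomputable section

theorem Lact_mul (c : ℕ) (hc : 0 < c) (hbar μ ν : ℝ) (hμν : μ ^ 2 + ν ^ 2 ≠ 0) (r s t : ℝ)
    (Φ Ψ : ℝ → ℝ → ℤ → ℂ) (hΦ : InSc c Φ) (hΨ : InSc c Ψ) :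
    ∀ (x y : ℝ) (p : ℤ),
      Lact c r s t (starProd hbar μ ν Φ Ψ) x y p =
      starProd hbar μ ν (Lact c r s t Φ) (Lact c r s t Ψ) x y p := by
  intro x y p
  simp only [Lact, starProd]
  -- No summability is needed: in a division ring constants always pull out of `tsum`.
  rw [← tsum_mul_left]
  refine tsum_congr fun q => ?_
  -- The shifts contribute `q (q - p) + (p - q) q = 0` to the phase, so the two exponents on the
  -- right add up to the one on the left.
  have phase : Complex.exp (2 * Real.pi * Complex.I *
        ((p : ℂ) * ((t : ℂ) + (c : ℂ) * (s : ℂ) * ((x : ℂ) - (r : ℂ))))) =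
      Complex.exp (2 * Real.pi * Complex.I * ((q : ℂ) * ((t : ℂ) + (c : ℂ) * (s : ℂ) *
        (((x - hbar * ((q - p : ℤ) : ℝ) * μ : ℝ) : ℂ) - (r : ℂ))))) *
      Complex.exp (2 * Real.pi * Complex.I * (((p - q : ℤ) : ℂ) * ((t : ℂ) + (c : ℂ) * (s : ℂ) *
        (((x - hbar * (q : ℝ) * μ : ℝ) : ℂ) - (r : ℂ))))) := by
    rw [← Complex.exp_add]
    congr 1
    push_cast
    ring
  rw [phase, sub_right_comm x r, sub_right_comm y s, sub_right_comm x r, sub_right_comm y s]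
  ring

end
end

section
/- The map δ₂ given by (δ₂Φ)(x,y,p) = 2πicpx·Φ(x,y,p) − (∂Φ/∂y)(x,y,p) is a derivation for the star product: for all Φ, Ψ ∈ S^c, δ₂(Φ ⋆ Ψ) = (δ₂Φ) ⋆ Ψ + Φ ⋆ (δ₂Ψ) as functions on ℝ × ℝ × ℤ. -/
/-!
The multiplier `p x` and the operator `∂/∂y` both obey a Leibniz rule termwise in the series defining
the star product. For the multiplier this is the identity
`q (x - ℏ(q-p)μ) + (p-q)(x - ℏqμ) = p x`; for `∂/∂y` it is the product rule, since the shifts in `y`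
do not depend on `y`. What has to be justified is the termwise differentiation of the series and the
splitting of the sums.

The arguments `x - ℏ(q-p)μ`, `x - ℏqμ` leave every compact set as `q → ±∞`, so the bounds in the
definition of `S^c` do not apply directly. Periodicity in `y` and the twisted periodicity in `x`
reduce every point to the unit square: `Φ` itself decays rapidly in `p`, uniformly in `(x, y)`
(`InSc.exists_bound`), while `∂Φ/∂y` picks up the factor `2πi c k p` with `k = ⌊x⌋` and hence grows
at most linearly in `x` (`InSc.tame_deriv`). Such functions are called tame below; the terms of the
star product of two tame functions are `O(1 / (1 + q²))` uniformly in `y` (`Tame.exists_term_bound`),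
which gives all the summability needed.
-/

open MeasureTheory ENNReal

noncomputable section

/-! ### Tame functions and terms of the star product -/

/-- Rapid decay in `p` (to fourth order), uniform in `y` and with at most linear growth in `x`. -/
def Tame (f : ℝ → ℝ → ℤ → ℂ) : Prop :=
  ∃ C : ℝ, ∀ (x y : ℝ) (p : ℤ), (1 + (p : ℝ) ^ 2) ^ 2 * ‖f x y p‖ ≤ C * (1 + |x|)

/-- The `q`-th term of the series defining `starProd`. -/
def starTerm (hbar μ ν : ℝ) (f g : ℝ → ℝ → ℤ → ℂ) (x y : ℝ) (p q : ℤ) : ℂ :=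
  f (x - hbar * ((q - p : ℤ) : ℝ) * μ) (y - hbar * ((q - p : ℤ) : ℝ) * ν) q *
    g (x - hbar * (q : ℝ) * μ) (y - hbar * (q : ℝ) * ν) (p - q)

lemma summable_one_div_one_add_sq : Summable fun q : ℤ => 1 / (1 + (q : ℝ) ^ 2) := by
  -- the extra summand covers `q = 0`, where `1 / q ^ 2` takes the value `0`
  have h := (Real.summable_one_div_int_pow.mpr (one_lt_two)).add
    (hasSum_ite_eq (0 : ℤ) (1 : ℝ)).summable
  refine Summable.of_nonneg_of_le (fun q => by positivity) (fun q => ?_) h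
  by_cases hq : q = 0
  · simp [hq]
  · have : (0 : ℝ) < (q : ℝ) ^ 2 := by positivity
    simp only [hq, if_false, add_zero]
    exact one_div_le_one_div_of_le this (by linarith)

lemma norm_twist (c : ℕ) (k p : ℤ) (y : ℝ) :
    ‖Complex.exp (2 * Real.pi * Complex.I * ((c : ℂ) * (k : ℂ) * (p : ℂ) * (y : ℂ)))‖ = 1 := by
  have : (2 * Real.pi * Complex.I * ((c : ℂ) * (k : ℂ) * (p : ℂ) * (y : ℂ)))
      = ((2 * Real.pi * (c * k * p * y) : ℝ) : ℂ) * Complex.I := by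
    push_cast; ring
  rw [this, Complex.norm_exp_ofReal_mul_I]

lemma fract_mem_square (x y : ℝ) :
    (Int.fract x, Int.fract y) ∈ Set.Icc (0 : ℝ) 1 ×ˢ Set.Icc (0 : ℝ) 1 :=
  ⟨⟨Int.fract_nonneg x, (Int.fract_lt_one x).le⟩, ⟨Int.fract_nonneg y, (Int.fract_lt_one y).le⟩⟩

/-! ### Global bounds for elements of `S^c` -/

namespace InSc

variable {c : ℕ} {Φ : ℝ → ℝ → ℤ → ℂ}

lemma fract_y (h : InSc c Φ) (x y : ℝ) (p : ℤ) : Φ x (Int.fract y) p = Φ x y p := by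
  have hp : Function.Periodic (fun y => Φ x y p) 1 := fun y => h.periodic_y x y p
  have := hp.sub_int_mul_eq (x := y) ⌊y⌋
  rwa [mul_one] at this

lemma deriv_fract_y (h : InSc c Φ) (x y : ℝ) (p : ℤ) :
    deriv (fun y' => Φ x y' p) (Int.fract y) = deriv (fun y' => Φ x y' p) y := by
  have hp : Function.Periodic (deriv fun y => Φ x y p) 1 := fun y => by
    rw [← deriv_comp_add_const]
    simp only [h.periodic_y]
  have := hp.sub_int_mul_eq (x := y) ⌊y⌋
  rwa [mul_one] at this

lemma twisted_fract (h : InSc c Φ) (x y : ℝ) (p : ℤ) :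
    Φ x y p = Complex.exp (2 * Real.pi * Complex.I * ((c : ℂ) * (⌊x⌋ : ℂ) * (p : ℂ) * (y : ℂ)))
      * Φ (Int.fract x) y p := by
  rw [← h.twisted, Int.fract_add_floor]

lemma differentiable_y (h : InSc c Φ) (x : ℝ) (p : ℤ) :
    Differentiable ℝ (fun y => Φ x y p) := by
  have h1 : Differentiable ℝ (fun xy : ℝ × ℝ => Φ xy.1 xy.2 p) :=
    (h.smooth p).differentiable (by simp)
  exact h1.comp ((differentiable_const x).prodMk differentiable_id)

/-- Elements of `S^c` decay rapidly in `p`, uniformly on the whole plane: both translations to the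
unit square preserve the modulus. -/
lemma exists_bound_s13 (h : InSc c Φ) (P : Polynomial ℤ) :
    ∃ C : ℝ, ∀ (x y : ℝ) (p : ℤ), |((P.eval p : ℤ) : ℝ)| * ‖Φ x y p‖ ≤ C := by
  obtain ⟨C, hC⟩ := h.poly_bounded P 0 0 _ (isCompact_Icc.prod isCompact_Icc)
  refine ⟨C, fun x y p => ?_⟩
  have := hC _ _ p (fract_mem_square x y)
  simp only [iteratedDeriv_zero] at this
  rwa [h.twisted_fract x y p, norm_mul, norm_twist, one_mul, ← h.fract_y]

/-- Differentiating the twisted periodicity relation in `y` bounds `∂Φ/∂y` at `x` by `Φ` itself and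
`∂Φ/∂y` at the fractional part of `x`; the linear growth comes from `|⌊x⌋| ≤ 1 + |x|`. -/
lemma norm_deriv_le (h : InSc c Φ) (x y : ℝ) (p : ℤ) :
    ‖deriv (fun y' => Φ x y' p) y‖ ≤ 2 * Real.pi * c * (1 + |x|) * (|(p : ℝ)| * ‖Φ x y p‖)
      + ‖deriv (fun y' => Φ (Int.fract x) y' p) y‖ := by
  set a : ℂ := 2 * Real.pi * Complex.I * ((c : ℂ) * (⌊x⌋ : ℂ) * (p : ℂ)) with ha
  have hE : HasDerivAt (fun y' : ℝ => Complex.exp (2 * Real.pi * Complex.I *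
      ((c : ℂ) * (⌊x⌋ : ℂ) * (p : ℂ) * (y' : ℂ)))) (Complex.exp (2 * Real.pi * Complex.I *
      ((c : ℂ) * (⌊x⌋ : ℂ) * (p : ℂ) * (y : ℂ))) * a) y := by
    have h1 : HasDerivAt (fun y' : ℝ => 2 * Real.pi * Complex.I *
        ((c : ℂ) * (⌊x⌋ : ℂ) * (p : ℂ) * (y' : ℂ))) a y := by
      have := (Complex.ofRealCLM.hasDerivAt (x := y)).const_mul a
      simp only [Complex.ofRealCLM_apply, Complex.ofReal_one, mul_one] at this
      refine this.congr_of_eventuallyEq (Filter.Eventually.of_forall fun y' => ?_)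
      simp only [ha]; ring
    exact h1.cexp
  have hD := hE.mul (h.differentiable_y (Int.fract x) p y).hasDerivAt
  have heq : (fun y' => Φ x y' p) = fun y' : ℝ => Complex.exp (2 * Real.pi * Complex.I *
      ((c : ℂ) * (⌊x⌋ : ℂ) * (p : ℂ) * (y' : ℂ))) * Φ (Int.fract x) y' p :=
    funext fun y' => h.twisted_fract x y' p
  have hval : deriv (fun y' => Φ x y' p) y = a * Φ x y p + Complex.exp (2 * Real.pi * Complex.I *
      ((c : ℂ) * (⌊x⌋ : ℂ) * (p : ℂ) * (y : ℂ))) * deriv (fun y' => Φ (Int.fract x) y' p) y := by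
    have hD' := hD.congr_of_eventuallyEq (Filter.EventuallyEq.of_eq heq)
    rw [hD'.deriv, h.twisted_fract x y p]; ring
  have hfloor : |(⌊x⌋ : ℝ)| ≤ 1 + |x| := by
    have h1 := Int.floor_le x
    have h2 := Int.lt_floor_add_one x
    rw [abs_le]
    constructor <;> cases abs_cases x <;> linarith
  have hna : ‖a‖ ≤ 2 * Real.pi * c * (1 + |x|) * |(p : ℝ)| := by
    have : ‖a‖ = 2 * Real.pi * c * |(⌊x⌋ : ℝ)| * |(p : ℝ)| := by
      simp only [ha, norm_mul, Complex.norm_I, Complex.norm_real, Complex.norm_natCast,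
        Complex.norm_intCast, Complex.norm_ofNat, Real.norm_eq_abs, abs_of_pos Real.pi_pos]
      ring
    rw [this]
    gcongr
  clear_value a
  rw [hval]
  refine (norm_add_le _ _).trans ?_
  rw [norm_mul, norm_mul, norm_twist, one_mul, ← mul_assoc]
  gcongr

lemma tame (h : InSc c Φ) : Tame Φ := by
  obtain ⟨C, hC⟩ := h.exists_bound_s13 ((1 + Polynomial.X ^ 2) ^ 2)
  refine ⟨C, fun x y p => ?_⟩
  have h1 := hC x y p
  simp only [Polynomial.eval_pow, Polynomial.eval_add, Polynomial.eval_one, Polynomial.eval_X] at h1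
  push_cast at h1
  rw [abs_of_nonneg (by positivity)] at h1
  have hC0 : 0 ≤ C := le_trans (by positivity) h1
  nlinarith [abs_nonneg x]

lemma exists_bound_mul (h : InSc c Φ) :
    ∃ C : ℝ, ∀ (x y : ℝ) (p : ℤ),
      (1 + (p : ℝ) ^ 2) ^ 2 * (|(p : ℝ)| * ‖Φ x y p‖) ≤ C := by
  obtain ⟨C, hC⟩ := h.exists_bound_s13 ((1 + Polynomial.X ^ 2) ^ 2 * Polynomial.X)
  refine ⟨C, fun x y p => ?_⟩
  have h1 := hC x y p
  simp only [Polynomial.eval_pow, Polynomial.eval_add, Polynomial.eval_one, Polynomial.eval_X,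
    Polynomial.eval_mul] at h1
  push_cast at h1
  rwa [abs_mul, abs_of_nonneg (a := (1 + (p : ℝ) ^ 2) ^ 2) (by positivity), mul_assoc] at h1

lemma tame_mul (h : InSc c Φ) :
    Tame fun x y p => 2 * Real.pi * Complex.I * (c : ℂ) * (p : ℂ) * (x : ℂ) * Φ x y p := by
  obtain ⟨C, hC⟩ := h.exists_bound_mul
  refine ⟨2 * Real.pi * c * C, fun x y p => ?_⟩
  have h1 := hC x y p
  have hC0 : 0 ≤ C := le_trans (by positivity) h1
  simp only [norm_mul, Complex.norm_I, Complex.norm_real, Complex.norm_natCast,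
    Complex.norm_intCast, Complex.norm_ofNat, Real.norm_eq_abs, abs_of_pos Real.pi_pos]
  calc _ = 2 * Real.pi * c * ((1 + (p : ℝ) ^ 2) ^ 2 * (|(p : ℝ)| * ‖Φ x y p‖)) * |x| := by ring
    _ ≤ 2 * Real.pi * c * C * (1 + |x|) := by
      gcongr
      linarith

lemma tame_deriv (h : InSc c Φ) : Tame fun x y p => deriv (fun y' => Φ x y' p) y := by
  obtain ⟨C, hC⟩ := h.exists_bound_mul
  obtain ⟨D, hD⟩ := h.poly_bounded ((1 + Polynomial.X ^ 2) ^ 2) 0 1 _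
    (isCompact_Icc.prod isCompact_Icc)
  refine ⟨2 * Real.pi * c * C + D, fun x y p => ?_⟩
  have h1 := hC x y p
  have h2 := hD _ _ p (fract_mem_square x y)
  simp only [iteratedDeriv_zero, iteratedDeriv_one, h.deriv_fract_y, Polynomial.eval_pow,
    Polynomial.eval_add, Polynomial.eval_one, Polynomial.eval_X] at h2
  push_cast at h2
  rw [abs_of_nonneg (by positivity)] at h2
  have hD0 : 0 ≤ D := le_trans (by positivity) h2
  calc _ ≤ (1 + (p : ℝ) ^ 2) ^ 2 * (2 * Real.pi * c * (1 + |x|) * (|(p : ℝ)| * ‖Φ x y p‖)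
      + ‖deriv (fun y' => Φ (Int.fract x) y' p) y‖) := by
        gcongr
        exact h.norm_deriv_le x y p
    _ = 2 * Real.pi * c * (1 + |x|) * ((1 + (p : ℝ) ^ 2) ^ 2 * (|(p : ℝ)| * ‖Φ x y p‖))
      + (1 + (p : ℝ) ^ 2) ^ 2 * ‖deriv (fun y' => Φ (Int.fract x) y' p) y‖ := by ring
    _ ≤ 2 * Real.pi * c * (1 + |x|) * C + D := by gcongr
    _ ≤ _ := by nlinarith [abs_nonneg x]

end InSc

/-! ### Summability of star products of tame functions -/

namespace Tame

variable {f g : ℝ → ℝ → ℤ → ℂ}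

/-- The decay of `f` in `q` absorbs the linear growth of both factors in their first argument. -/
lemma exists_term_bound (hf : Tame f) (hg : Tame g) (hbar μ ν x : ℝ) (p : ℤ) :
    ∃ A : ℝ, ∀ (q : ℤ) (y : ℝ),
      ‖starTerm hbar μ ν f g x y p q‖ ≤ A * (1 / (1 + (q : ℝ) ^ 2)) := by
  obtain ⟨C, hC⟩ := hf
  obtain ⟨D, hD⟩ := hg
  have hC0 : 0 ≤ C := by simpa using (norm_nonneg _).trans (by simpa using hC 0 0 0)
  have hD0 : 0 ≤ D := by simpa using (norm_nonneg _).trans (by simpa using hD 0 0 0)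
  set B : ℝ := 1 + |x| + |hbar * μ| * (1 + |(p : ℝ)|) with hB
  have hB0 : 0 ≤ B := by positivity
  refine ⟨2 * C * D * B ^ 2, fun q y => ?_⟩
  set x₁ := x - hbar * ((q - p : ℤ) : ℝ) * μ with hx₁
  set x₂ := x - hbar * (q : ℝ) * μ with hx₂
  have hm := abs_nonneg (hbar * μ)
  have hq := abs_nonneg (q : ℝ)
  have hp := abs_nonneg (p : ℝ)
  have hx := abs_nonneg x
  have hmp := mul_nonneg hm hp
  have hxq := mul_nonneg hx hq
  have hmpq := mul_nonneg hmp hq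
  have e₁ : 1 + |x₁| ≤ B * (1 + |(q : ℝ)|) := by
    have h1 : |x₁| ≤ |x| + |hbar * μ| * (|(q : ℝ)| + |(p : ℝ)|) := by
      have : x₁ = x - (hbar * μ) * ((q : ℝ) - p) := by rw [hx₁]; push_cast; ring
      rw [this]
      refine (abs_sub _ _).trans ?_
      rw [abs_mul]
      gcongr
      exact abs_sub _ _
    rw [hB]; nlinarith
  have e₂ : 1 + |x₂| ≤ B * (1 + |(q : ℝ)|) := by
    have h1 : |x₂| ≤ |x| + |hbar * μ| * |(q : ℝ)| := by
      have : x₂ = x - (hbar * μ) * (q : ℝ) := by rw [hx₂]; ring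
      rw [this, ← abs_mul]
      exact abs_sub _ _
    rw [hB]; nlinarith
  have hq2 : (1 + |(q : ℝ)|) ^ 2 ≤ 2 * (1 + (q : ℝ) ^ 2) := by
    nlinarith [sq_nonneg (1 - |(q : ℝ)|), sq_abs (q : ℝ)]
  have f₁ := (hC x₁ (y - hbar * ((q - p : ℤ) : ℝ) * ν) q).trans
    (mul_le_mul_of_nonneg_left e₁ hC0)
  have g₁ : ‖g x₂ (y - hbar * (q : ℝ) * ν) (p - q)‖ ≤ D * (B * (1 + |(q : ℝ)|)) := by
    refine le_trans ?_ ((hD x₂ (y - hbar * (q : ℝ) * ν) (p - q)).trans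
      (mul_le_mul_of_nonneg_left e₂ hD0))
    refine le_mul_of_one_le_left (norm_nonneg _) (one_le_pow₀ ?_)
    nlinarith [sq_nonneg ((p - q : ℤ) : ℝ)]
  have hW : (0 : ℝ) < 1 + (q : ℝ) ^ 2 := by positivity
  rw [starTerm, norm_mul, mul_one_div, le_div_iff₀ hW]
  refine le_of_mul_le_mul_right ?_ hW
  calc _ = ((1 + (q : ℝ) ^ 2) ^ 2 * ‖f x₁ (y - hbar * ((q - p : ℤ) : ℝ) * ν) q‖)
        * ‖g x₂ (y - hbar * (q : ℝ) * ν) (p - q)‖ := by ring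
    _ ≤ (C * (B * (1 + |(q : ℝ)|))) * (D * (B * (1 + |(q : ℝ)|))) := by gcongr
    _ = C * D * B ^ 2 * (1 + |(q : ℝ)|) ^ 2 := by ring
    _ ≤ C * D * B ^ 2 * (2 * (1 + (q : ℝ) ^ 2)) := by gcongr
    _ = _ := by ring

lemma summable_starTerm (hf : Tame f) (hg : Tame g) (hbar μ ν x y : ℝ) (p : ℤ) :
    Summable (starTerm hbar μ ν f g x y p) := by
  obtain ⟨A, hA⟩ := hf.exists_term_bound hg hbar μ ν x p
  exact Summable.of_norm_bounded (summable_one_div_one_add_sq.mul_left A) fun q => hA q y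

end Tame

/-! ### The Leibniz rule -/

lemma starProd_eq_tsum (hbar μ ν : ℝ) (f g : ℝ → ℝ → ℤ → ℂ) (x y : ℝ) (p : ℤ) :
    starProd hbar μ ν f g x y p = ∑' q, starTerm hbar μ ν f g x y p q := rfl

/-- The Leibniz rule for `∂/∂y`, by termwise differentiation. -/
lemma hasDerivAt_starProd {c : ℕ} {Φ Ψ : ℝ → ℝ → ℤ → ℂ} (hΦ : InSc c Φ) (hΨ : InSc c Ψ)
    (hbar μ ν x y : ℝ) (p : ℤ) :
    HasDerivAt (fun y' => starProd hbar μ ν Φ Ψ x y' p)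
      (∑' q, (starTerm hbar μ ν (fun x y p => deriv (fun y' => Φ x y' p) y) Ψ x y p q
        + starTerm hbar μ ν Φ (fun x y p => deriv (fun y' => Ψ x y' p) y) x y p q)) y := by
  obtain ⟨A, hA⟩ := hΦ.tame_deriv.exists_term_bound hΨ.tame hbar μ ν x p
  obtain ⟨B, hB⟩ := hΦ.tame.exists_term_bound hΨ.tame_deriv hbar μ ν x p
  refine hasDerivAt_tsum (y₀ := y)
    (g := fun q y => starTerm hbar μ ν Φ Ψ x y p q)
    (g' := fun q y => starTerm hbar μ ν (fun x y p => deriv (fun y' => Φ x y' p) y) Ψ x y p q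
      + starTerm hbar μ ν Φ (fun x y p => deriv (fun y' => Ψ x y' p) y) x y p q)
    ((summable_one_div_one_add_sq.mul_left A).add (summable_one_div_one_add_sq.mul_left B))
    (fun q y => ?_) (fun q y => (norm_add_le _ _).trans (add_le_add (hA q y) (hB q y)))
    (hΦ.tame.summable_starTerm hΨ.tame hbar μ ν x y p) y
  have h1 := (hΦ.differentiable_y (x - hbar * ((q - p : ℤ) : ℝ) * μ) q
    (y - hbar * ((q - p : ℤ) : ℝ) * ν)).hasDerivAt.comp_sub_const y _
  have h2 := (hΨ.differentiable_y (x - hbar * (q : ℝ) * μ) (p - q)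
    (y - hbar * (q : ℝ) * ν)).hasDerivAt.comp_sub_const y _
  exact h1.mul h2

theorem d2_derivation (c : ℕ) (hc : 0 < c) (hbar μ ν : ℝ) (hμν : μ ^ 2 + ν ^ 2 ≠ 0)
    (Φ Ψ : ℝ → ℝ → ℤ → ℂ) (hΦ : InSc c Φ) (hΨ : InSc c Ψ) :
    ∀ (x y : ℝ) (p : ℤ),
      d2 c (starProd hbar μ ν Φ Ψ) x y p =
      starProd hbar μ ν (d2 c Φ) Ψ x y p + starProd hbar μ ν Φ (d2 c Ψ) x y p := by
  intro x y p
  have s₁ := hΦ.tame_mul.summable_starTerm hΨ.tame hbar μ ν x y p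
  have s₂ := hΦ.tame.summable_starTerm hΨ.tame_mul hbar μ ν x y p
  have s₃ := hΦ.tame_deriv.summable_starTerm hΨ.tame hbar μ ν x y p
  have s₄ := hΦ.tame.summable_starTerm hΨ.tame_deriv hbar μ ν x y p
  have s := hΦ.tame.summable_starTerm hΨ.tame hbar μ ν x y p
  have hl : starProd hbar μ ν (d2 c Φ) Ψ x y p = ∑' q, (starTerm hbar μ ν
      (fun x y p => 2 * Real.pi * Complex.I * (c : ℂ) * (p : ℂ) * (x : ℂ) * Φ x y p) Ψ x y p q
      - starTerm hbar μ ν (fun x y p => deriv (fun y' => Φ x y' p) y) Ψ x y p q) := by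
    rw [starProd_eq_tsum]
    refine tsum_congr fun q => ?_
    simp only [starTerm, d2, sub_mul]
  have hr : starProd hbar μ ν Φ (d2 c Ψ) x y p = ∑' q, (starTerm hbar μ ν Φ
      (fun x y p => 2 * Real.pi * Complex.I * (c : ℂ) * (p : ℂ) * (x : ℂ) * Ψ x y p) x y p q
      - starTerm hbar μ ν Φ (fun x y p => deriv (fun y' => Ψ x y' p) y) x y p q) := by
    rw [starProd_eq_tsum]
    refine tsum_congr fun q => ?_
    simp only [starTerm, d2, mul_sub]
  rw [hl, hr, ← (s₁.sub s₃).tsum_add (s₂.sub s₄), d2,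
    (hasDerivAt_starProd hΦ hΨ hbar μ ν x y p).deriv, starProd_eq_tsum, ← s.tsum_mul_left,
    ← (s.mul_left _).tsum_sub (s₃.add s₄)]
  refine tsum_congr fun q => ?_
  -- the multiplier identity `q (x - ℏ(q-p)μ) + (p-q)(x - ℏqμ) = p x`
  simp only [starTerm]
  push_cast
  ring

end
end

section
/- If Φ ∈ S^c satisfies δ₁Φ = 0, δ₂Φ = 0, and δ₃Φ = 0 (where (δ₁Φ)(x,y,p) = −(∂Φ/∂x)(x,y,p), (δ₂Φ)(x,y,p) = 2πicpx·Φ(x,y,p) − (∂Φ/∂y)(x,y,p), and (δ₃Φ)(x,y,p) = 2πip·Φ(x,y,p)), then there exists λ ∈ ℂ such that Φ(x, y, p) = λ when p = 0 and Φ(x, y, p) = 0 when p ≠ 0; i.e. Φ is a scalar multiple of the identity element of S^c. -/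
/-!
The equation `δ₃Φ = 0` says `2πip·Φ(x, y, p) = 0`, which kills every mode `p ≠ 0`. On the mode
`p = 0` the term `2πicpx·Φ` of `δ₂` disappears, so `δ₁Φ = δ₂Φ = 0` says that both partial
derivatives of the smooth function `Φ(·, ·, 0)` vanish; it is therefore constant, and
`λ = Φ(0, 0, 0)`.
-/

open MeasureTheory ENNReal

noncomputable section

theorem scalar_of_derivations_vanish (c : ℕ) (hc : 0 < c) (hbar μ ν : ℝ) (hμν : μ ^ 2 + ν ^ 2 ≠ 0)
    (Φ : ℝ → ℝ → ℤ → ℂ) (hΦ : InSc c Φ)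
    (h1 : ∀ (x y : ℝ) (p : ℤ), d1 Φ x y p = 0)
    (h2 : ∀ (x y : ℝ) (p : ℤ), d2 c Φ x y p = 0)
    (h3 : ∀ (x y : ℝ) (p : ℤ), d3 Φ x y p = 0) :
    ∃ lam : ℂ, ∀ (x y : ℝ) (p : ℤ), Φ x y p = if p = 0 then lam else 0 := by
  have hx : ∀ (x y : ℝ), Φ x y 0 = Φ 0 y 0 := by
    intro x y
    have hd : Differentiable ℝ (fun x' : ℝ => Φ x' y 0) :=
      ((hΦ.smooth 0).differentiable (by simp)).comp
        (differentiable_id.prodMk (differentiable_const y))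
    exact is_const_of_deriv_eq_zero hd (fun x' => neg_eq_zero.mp (h1 x' y 0)) x 0
  have hy : ∀ (x y : ℝ), Φ x y 0 = Φ x 0 0 := by
    intro x y
    have hd : Differentiable ℝ (fun y' : ℝ => Φ x y' 0) :=
      ((hΦ.smooth 0).differentiable (by simp)).comp
        ((differentiable_const x).prodMk differentiable_id)
    refine is_const_of_deriv_eq_zero hd (fun y' => ?_) y 0
    simpa [d2] using h2 x y' 0
  refine ⟨Φ 0 0 0, fun x y p => ?_⟩
  split_ifs with hp
  · rw [hp, hx, hy]
  · simpa [d3, Real.pi_ne_zero, hp] using h3 x y p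

end
end
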